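/- arXiv:1907.05457 — 5 statements merged into one kernel-verified Lean document; each statement's English description precedes it below -/
import Mathlib

section
/- Let B be an n×k real matrix with rows b_1,…,b_n such that every column of B has at most k non-zero entries, and let x ∈ ℝ^k be a vector such that ‖x‖₂ ≥ ‖b_i‖₂ for all i ∈ {1,…,n}. Then ∑_{i=1}^n |⟨x, b_i⟩| ≤ k^{3/2}·‖x‖₂². -/
/-- For an `n × k` real matrix `B` whose every column has at most `k` nonzero entries, and a
vector `x ∈ ℝ^k` with `‖x‖₂ ≥ ‖b_i‖₂` for every row `b_i` of `B`, we have
`∑ i, |⟨x, b_i⟩| ≤ k^{3/2} · ‖x‖₂²`. -/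
theorem inner_prod_by_length (n k : ℕ) (B : Matrix (Fin n) (Fin k) ℝ) (x : Fin k → ℝ)
    (hsparse : ∀ j, (Finset.univ.filter (fun i => B i j ≠ 0)).card ≤ k)
    (hx : ∀ i, Real.sqrt (∑ j, (B i j) ^ 2) ≤ Real.sqrt (∑ j, (x j) ^ 2)) :
    ∑ i, |∑ j, x j * B i j| ≤ (k : ℝ) * Real.sqrt k * ∑ j, (x j) ^ 2 := by
  set s := Real.sqrt (∑ j, (x j) ^ 2) with hs
  have hS0 : 0 ≤ ∑ j, (x j) ^ 2 := Finset.sum_nonneg fun j _ => sq_nonneg _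
  have hs0 : 0 ≤ s := Real.sqrt_nonneg _
  have hss : s * s = ∑ j, (x j) ^ 2 := Real.mul_self_sqrt hS0
  have hB : ∀ i j, |B i j| ≤ s := fun i j => by
    refine le_trans ?_ (hx i)
    apply Real.abs_le_sqrt
    exact Finset.single_le_sum (f := fun j => (B i j) ^ 2) (fun j _ => sq_nonneg _)
      (Finset.mem_univ j)
  have hcol : ∀ j, ∑ i, |B i j| ≤ k * s := fun j => by
    have h1 : ∑ i, |B i j| = ∑ i ∈ Finset.univ.filter (fun i => B i j ≠ 0), |B i j| := by
      symm
      apply Finset.sum_subset (Finset.filter_subset _ _)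
      intro i _ hi
      simpa using hi
    rw [h1]
    refine (Finset.sum_le_card_nsmul _ _ s (fun i _ => hB i j)).trans ?_
    rw [nsmul_eq_mul]
    have : ((Finset.univ.filter (fun i => B i j ≠ 0)).card : ℝ) ≤ k := by
      exact_mod_cast hsparse j
    exact mul_le_mul_of_nonneg_right this hs0
  have hl1 : ∑ j, |x j| ≤ Real.sqrt k * s := by
    rw [hs, ← Real.sqrt_mul (Nat.cast_nonneg k)]
    apply Real.le_sqrt_of_sq_le
    have := sq_sum_le_card_mul_sum_sq (s := (Finset.univ : Finset (Fin k))) (f := fun j => |x j|)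
    simpa using this
  calc ∑ i, |∑ j, x j * B i j| ≤ ∑ i, ∑ j, |x j| * |B i j| := by
        refine Finset.sum_le_sum fun i _ => (Finset.abs_sum_le_sum_abs _ _).trans ?_
        simp [abs_mul]
    _ = ∑ j, |x j| * ∑ i, |B i j| := by
        rw [Finset.sum_comm]
        simp [Finset.mul_sum]
    _ ≤ ∑ j, |x j| * (k * s) :=
        Finset.sum_le_sum fun j _ => mul_le_mul_of_nonneg_left (hcol j) (abs_nonneg _)
    _ = (∑ j, |x j|) * (k * s) := by rw [Finset.sum_mul]
    _ ≤ (Real.sqrt k * s) * (k * s) := mul_le_mul_of_nonneg_right hl1 (by positivity)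
    _ = (k : ℝ) * Real.sqrt k * ∑ j, (x j) ^ 2 := by rw [← hss]; ring
end

section
/- Let B be an n×k real matrix with rows b_1,…,b_n such that every column of B has at most k non-zero entries, and let x ∈ ℝ^k be a vector such that ‖x‖₂ ≥ ‖b_i‖₂ for all i ∈ {1,…,n}. Then ∑_{i=1}^n ⟨x, b_i⟩² ≤ k·‖x‖₂⁴. -/
/-- For an `n × k` real matrix `B` whose every column has at most `k` nonzero entries, and a
vector `x ∈ ℝ^k` with `‖x‖₂ ≥ ‖b_i‖₂` for every row `b_i` of `B`, we have
`∑ i, ⟨x, b_i⟩² ≤ k · ‖x‖₂⁴`. -/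
theorem inner_prod_squared_by_length (n k : ℕ) (B : Matrix (Fin n) (Fin k) ℝ) (x : Fin k → ℝ)
    (hsparse : ∀ j, (Finset.univ.filter (fun i => B i j ≠ 0)).card ≤ k)
    (hx : ∀ i, Real.sqrt (∑ j, (B i j) ^ 2) ≤ Real.sqrt (∑ j, (x j) ^ 2)) :
    ∑ i, (∑ j, x j * B i j) ^ 2 ≤ (k : ℝ) * (∑ j, (x j) ^ 2) ^ 2 := by
  have hS : 0 ≤ ∑ j, (x j) ^ 2 := Finset.sum_nonneg fun j _ => sq_nonneg _
  have hrow : ∀ i, (∑ j, x j * B i j) ^ 2 ≤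
      (∑ j, if B i j ≠ 0 then (x j) ^ 2 else 0) * ∑ j, (x j) ^ 2 := by
    intro i
    have h1 : ∑ j, (B i j) ^ 2 ≤ ∑ j, (x j) ^ 2 := (Real.sqrt_le_sqrt_iff hS).1 (hx i)
    have h2 := Finset.sum_mul_sq_le_sq_mul_sq Finset.univ
      (fun j => if B i j ≠ 0 then x j else 0) (fun j => B i j)
    have e1 : ∑ j, (if B i j ≠ 0 then x j else 0) * B i j = ∑ j, x j * B i j := by
      refine Finset.sum_congr rfl fun j _ => ?_
      by_cases h : B i j = 0 <;> simp [h]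
    have e2 : ∑ j, (if B i j ≠ 0 then x j else 0) ^ 2 =
        ∑ j, if B i j ≠ 0 then (x j) ^ 2 else 0 := by
      refine Finset.sum_congr rfl fun j _ => ?_
      by_cases h : B i j = 0 <;> simp [h]
    rw [e1, e2] at h2
    refine h2.trans (mul_le_mul_of_nonneg_left h1 ?_)
    refine Finset.sum_nonneg fun j _ => ?_
    split_ifs <;> positivity
  calc ∑ i, (∑ j, x j * B i j) ^ 2
      ≤ ∑ i, (∑ j, if B i j ≠ 0 then (x j) ^ 2 else 0) * ∑ j, (x j) ^ 2 :=
        Finset.sum_le_sum fun i _ => hrow i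
    _ = (∑ j, ∑ i, if B i j ≠ 0 then (x j) ^ 2 else 0) * ∑ j, (x j) ^ 2 := by
        rw [← Finset.sum_mul, Finset.sum_comm]
    _ ≤ (∑ j, (k : ℝ) * (x j) ^ 2) * ∑ j, (x j) ^ 2 := by
        refine mul_le_mul_of_nonneg_right (Finset.sum_le_sum fun j _ => ?_) hS
        rw [← Finset.sum_filter, Finset.sum_const, nsmul_eq_mul]
        exact mul_le_mul_of_nonneg_right (by exact_mod_cast hsparse j) (sq_nonneg _)
    _ = (k : ℝ) * (∑ j, (x j) ^ 2) ^ 2 := by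
        rw [← Finset.mul_sum]; ring
end

section
/- Let W be a symmetric n×n real matrix with nonnegative entries and zero diagonal (representing edge weights of an undirected graph), and let L = D − W be the associated Laplacian, where D is the diagonal matrix with D_{uu} = ∑_v W_{uv}. Denote by l_1,…,l_n the rows of L, and assume every row of L has at most k non-zero entries. Then for every u ∈ {1,…,n}, ∑_{v : ‖l_v‖₂ ≤ ‖l_u‖₂} |⟨l_u, l_v⟩| ≤ 2k·‖l_u‖₂². -/
/-- Let `W` be a symmetric `n × n` real matrix with nonnegative entries and zero diagonal,
and let `L = D − W` be the associated graph Laplacian (`L u v = -W u v` off the diagonal,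
`L u u = ∑ v, W u v`). If every row of `L` has at most `k` nonzero entries, then for every
`u`, the sum of `|⟨l_u, l_v⟩|` over rows `l_v` with `‖l_v‖₂ ≤ ‖l_u‖₂` is at most
`2k·‖l_u‖₂²`. -/
theorem laplacian_inner_prod_by_length (n k : ℕ) (W : Matrix (Fin n) (Fin n) ℝ)
    (hWsymm : ∀ u v, W u v = W v u) (hW0 : ∀ u v, 0 ≤ W u v) (hWdiag : ∀ u, W u u = 0)
    (L : Matrix (Fin n) (Fin n) ℝ)
    (hL : ∀ u v, L u v = if u = v then ∑ w, W u w else -W u v)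
    (hsparse : ∀ u, (Finset.univ.filter (fun j => L u j ≠ 0)).card ≤ k)
    (u : Fin n) :
    ∑ v ∈ Finset.univ.filter
        (fun v => Real.sqrt (∑ j, (L v j) ^ 2) ≤ Real.sqrt (∑ j, (L u j) ^ 2)),
      |∑ j, L u j * L v j| ≤ 2 * k * ∑ j, (L u j) ^ 2 := by
  set N := Real.sqrt (∑ j, (L u j) ^ 2) with hN
  have hN0 : 0 ≤ N := Real.sqrt_nonneg _
  have hNsq : N ^ 2 = ∑ j, (L u j) ^ 2 :=
    Real.sq_sqrt (Finset.sum_nonneg fun _ _ => sq_nonneg _)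
  have hLsymm : ∀ a b, L a b = L b a := by
    intro a b
    rw [hL, hL]
    by_cases h : a = b
    · subst h; rfl
    · rw [if_neg h, if_neg (Ne.symm h), hWsymm]
  have hentry : ∀ v j, |L v j| ≤ Real.sqrt (∑ j, (L v j) ^ 2) := by
    intro v j
    apply Real.abs_le_sqrt
    exact Finset.single_le_sum (f := fun j => (L v j) ^ 2)
      (fun _ _ => sq_nonneg _) (Finset.mem_univ j)
  have hD0 : 0 ≤ ∑ w, W u w := Finset.sum_nonneg fun _ _ => hW0 _ _
  have hrow : ∑ j, |L u j| ≤ 2 * N := by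
    have h1 : ∀ j, |L u j| = (if u = j then ∑ w, W u w else 0) + W u j := by
      intro j
      rw [hL]
      by_cases h : u = j
      · subst h; simp [hWdiag, abs_of_nonneg hD0]
      · simp [h, abs_of_nonneg (hW0 u j)]
    have h2 : ∑ w, W u w ≤ N := by
      have := hentry u u
      rw [hL u u, if_pos rfl, abs_of_nonneg hD0] at this
      exact this
    rw [Finset.sum_congr rfl (fun j _ => h1 j), Finset.sum_add_distrib]
    simp only [Finset.sum_ite_eq, Finset.mem_univ, if_true]
    linarith
  set S := Finset.univ.filter (fun v => Real.sqrt (∑ j, (L v j) ^ 2) ≤ N) with hS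
  have hcol : ∀ j, ∑ v ∈ S, |L v j| ≤ k * N := by
    intro j
    calc ∑ v ∈ S, |L v j| ≤ ∑ v ∈ S, (if L j v ≠ 0 then N else 0) := by
          apply Finset.sum_le_sum
          intro v hv
          have hv' : Real.sqrt (∑ j, (L v j) ^ 2) ≤ N := (Finset.mem_filter.mp hv).2
          by_cases h : L j v = 0
          · rw [hLsymm v j, h]; simp
          · rw [if_pos h]; exact (hentry v j).trans hv'
      _ ≤ ∑ v, (if L j v ≠ 0 then N else 0) := by
          apply Finset.sum_le_sum_of_subset_of_nonneg (Finset.subset_univ _)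
          intro v _ _
          split_ifs
          · exact hN0
          · exact le_rfl
      _ = ((Finset.univ.filter (fun v => L j v ≠ 0)).card : ℝ) * N := by
          rw [← Finset.sum_filter, Finset.sum_const, nsmul_eq_mul]
      _ ≤ k * N := mul_le_mul_of_nonneg_right (by exact_mod_cast hsparse j) hN0
  calc ∑ v ∈ S, |∑ j, L u j * L v j| ≤ ∑ v ∈ S, ∑ j, |L u j| * |L v j| := by
        apply Finset.sum_le_sum
        intro v _
        refine (Finset.abs_sum_le_sum_abs _ _).trans (le_of_eq ?_)
        exact Finset.sum_congr rfl fun j _ => abs_mul _ _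
    _ = ∑ j, |L u j| * ∑ v ∈ S, |L v j| := by
        rw [Finset.sum_comm]
        exact Finset.sum_congr rfl fun j _ => (Finset.mul_sum _ _ _).symm
    _ ≤ ∑ j, |L u j| * (k * N) :=
        Finset.sum_le_sum fun j _ => mul_le_mul_of_nonneg_left (hcol j) (abs_nonneg _)
    _ = (∑ j, |L u j|) * (k * N) := (Finset.sum_mul _ _ _).symm
    _ ≤ (2 * N) * (k * N) := mul_le_mul_of_nonneg_right hrow (by positivity)
    _ = 2 * k * ∑ j, (L u j) ^ 2 := by rw [← hNsq]; ring
end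

section
/- Let 0 < α ≤ β be real constants. Let B be an n×k real matrix with rows b_1,…,b_n such that every entry of B is either zero or lies in the interval [α, β], and every column of B has at most k non-zero entries. Let x ∈ ℝ^k be a vector each of whose entries is either zero or lies in [α, β], and such that ‖x‖₂ ≥ ‖b_i‖₂ for all i ∈ {1,…,n}. Then ∑_{i=1}^n |⟨x, b_i⟩| ≤ k·(β/α)·‖x‖₂². -/
/-- Let `0 < α ≤ β`. If `B` is an `n × k` real matrix whose entries are each zero or in
`[α, β]`, every column of `B` has at most `k` nonzero entries, and `x ∈ ℝ^k` has entries each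
zero or in `[α, β]` with `‖x‖₂ ≥ ‖b_i‖₂` for every row `b_i` of `B`, then
`∑ i, |⟨x, b_i⟩| ≤ k·(β/α)·‖x‖₂²`. -/
theorem constants_inner_prod_by_length (n k : ℕ) (α β : ℝ) (hα : 0 < α) (hαβ : α ≤ β)
    (B : Matrix (Fin n) (Fin k) ℝ) (x : Fin k → ℝ)
    (hB : ∀ i j, B i j = 0 ∨ (α ≤ B i j ∧ B i j ≤ β))
    (hsparse : ∀ j, (Finset.univ.filter (fun i => B i j ≠ 0)).card ≤ k)
    (hxrange : ∀ j, x j = 0 ∨ (α ≤ x j ∧ x j ≤ β))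
    (hx : ∀ i, Real.sqrt (∑ j, (B i j) ^ 2) ≤ Real.sqrt (∑ j, (x j) ^ 2)) :
    ∑ i, |∑ j, x j * B i j| ≤ (k : ℝ) * (β / α) * ∑ j, (x j) ^ 2 := by
  have hβ : 0 < β := lt_of_lt_of_le hα hαβ
  have hB0 : ∀ i j, 0 ≤ B i j := fun i j => by
    rcases hB i j with h | h
    · exact h.ge
    · linarith [h.1]
  have hx0 : ∀ j, 0 ≤ x j := fun j => by
    rcases hxrange j with h | h
    · exact h.ge
    · linarith [h.1]
  have habs : ∀ i, |∑ j, x j * B i j| = ∑ j, x j * B i j := fun i =>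
    abs_of_nonneg (Finset.sum_nonneg fun j _ => mul_nonneg (hx0 j) (hB0 i j))
  have hcol : ∀ j, ∑ i, B i j ≤ (k : ℝ) * β := fun j => by
    calc ∑ i, B i j ≤ ∑ i, (if B i j ≠ 0 then β else 0) := by
          refine Finset.sum_le_sum fun i _ => ?_
          split_ifs with h
          · rcases hB i j with h' | h'
            · exact absurd h' h
            · exact h'.2
          · exact (not_not.mp h).le
      _ = ((Finset.univ.filter (fun i => B i j ≠ 0)).card : ℝ) * β := by
          rw [← Finset.sum_filter, Finset.sum_const, nsmul_eq_mul]
      _ ≤ (k : ℝ) * β :=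
          mul_le_mul_of_nonneg_right (by exact_mod_cast hsparse j) hβ.le
  have hxj : ∀ j, x j ≤ x j ^ 2 / α := fun j => by
    rw [le_div_iff₀ hα]
    rcases hxrange j with h | h
    · simp [h]
    · nlinarith [h.1, hx0 j]
  simp_rw [habs]
  rw [Finset.sum_comm, Finset.mul_sum]
  refine Finset.sum_le_sum fun j _ => ?_
  rw [← Finset.mul_sum]
  calc x j * ∑ i, B i j ≤ x j * ((k : ℝ) * β) := mul_le_mul_of_nonneg_left (hcol j) (hx0 j)
    _ ≤ x j ^ 2 / α * ((k : ℝ) * β) := mul_le_mul_of_nonneg_right (hxj j) (by positivity)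
    _ = (k : ℝ) * (β / α) * x j ^ 2 := by ring
end

section
/- Let p be a positive integer divisible by 4 and let t ≥ 2 be an even integer. For each integer l with 0 ≤ l ≤ t, define r₁(l) = √( ((t²+1) + √((t²−1)² + 4lt)) / 2 ) and r₂(l) = √( ((t²+1) − √((t²−1)² + 4lt)) / 2 ). Then ∑_{l=0}^{t} (−1)^l · C(t,l) · ( (l−1) + r₁(l)^p + r₂(l)^p ) ≠ 0 if and only if t ≤ p/4. -/
/-- Signed alternating binomial power sum. -/
noncomputable def altPow (t i : ℕ) : ℝ :=
  ∑ l ∈ Finset.range (t + 1), (-1 : ℝ) ^ l * (t.choose l) * (l : ℝ) ^ i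

theorem altPow_zero_right (t : ℕ) : altPow (t + 1) 0 = 0 := by
  have h := add_pow (-1 : ℝ) 1 (t + 1)
  simp only [neg_add_cancel, one_pow, mul_one] at h
  simp only [altPow, pow_zero, mul_one]
  rw [← h]; simp

theorem altPow_succ (t i : ℕ) :
    altPow (t + 1) (i + 1) = (t + 1) * (altPow (t + 1) i - altPow t i) := by
  have h2 : altPow t i
      = ∑ l ∈ Finset.range (t + 1 + 1), (-1 : ℝ) ^ l * (t.choose l) * (l : ℝ) ^ i := by
    rw [Finset.sum_range_succ _ (t + 1)]
    simp [altPow]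
  rw [h2]
  unfold altPow
  rw [← Finset.sum_sub_distrib, Finset.mul_sum]
  refine Finset.sum_congr rfl fun l hl => ?_
  have hl' : l ≤ t + 1 := by
    have := Finset.mem_range.1 hl
    omega
  have key : ((t : ℝ) + 1) * (t.choose l) = ((t + 1).choose l) * ((t : ℝ) + 1 - l) := by
    have h3 : (t + 1) * t.choose l = (t + 1).choose l * (t + 1 - l) := by
      rw [mul_comm]
      exact Nat.choose_mul_succ_eq t l
    have h4 : (((t + 1) * t.choose l : ℕ) : ℝ) = (((t + 1).choose l * (t + 1 - l) : ℕ) : ℝ) := by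
      rw [h3]
    rw [Nat.cast_mul, Nat.cast_mul, Nat.cast_sub hl'] at h4
    push_cast at h4
    exact h4
  linear_combination ((-1 : ℝ) ^ l * (l : ℝ) ^ i) * key

theorem altPow_zero_left (i : ℕ) : altPow 0 i = 0 ^ i := by
  simp [altPow]

theorem altPow_nonneg (i : ℕ) : ∀ t, 0 ≤ (-1 : ℝ) ^ t * altPow t i := by
  induction i with
  | zero =>
    intro t
    cases t with
    | zero => simp [altPow_zero_left]
    | succ t => simp [altPow_zero_right]
  | succ i ih =>
    intro t
    cases t with
    | zero => simp [altPow_zero_left]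
    | succ t =>
      have h1 := ih (t + 1)
      have h2 := ih t
      rw [altPow_succ]
      have : (-1 : ℝ) ^ (t + 1) * ((t + 1) * (altPow (t + 1) i - altPow t i))
        = (t + 1) * ((-1 : ℝ) ^ (t + 1) * altPow (t + 1) i + (-1 : ℝ) ^ t * altPow t i) := by
        ring
      rw [this]
      positivity

theorem altPow_eq_zero (i : ℕ) : ∀ t, i < t → altPow t i = 0 := by
  induction i with
  | zero =>
    intro t ht
    obtain ⟨t, rfl⟩ : ∃ u, t = u + 1 := ⟨t - 1, by omega⟩
    exact altPow_zero_right t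
  | succ i ih =>
    intro t ht
    obtain ⟨t, rfl⟩ : ∃ u, t = u + 1 := ⟨t - 1, by omega⟩
    rw [altPow_succ, ih (t + 1) (by omega), ih t (by omega)]
    simp

theorem altPow_pos (t : ℕ) : 0 < (-1 : ℝ) ^ t * altPow t t := by
  induction t with
  | zero => simp [altPow_zero_left]
  | succ t ih =>
    rw [altPow_succ, altPow_eq_zero t (t + 1) (by omega)]
    have : (-1 : ℝ) ^ (t + 1) * ((t + 1) * (0 - altPow t t))
        = (t + 1) * ((-1 : ℝ) ^ t * altPow t t) := by
      ring
    rw [this]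
    positivity

/-- Alternating sum of powers of an affine function. -/
noncomputable def altAff (a b : ℝ) (t j : ℕ) : ℝ :=
  ∑ l ∈ Finset.range (t + 1), (-1 : ℝ) ^ l * (t.choose l) * (b * l + a) ^ j

theorem altAff_eq (a b : ℝ) (t j : ℕ) : altAff a b t j
    = ∑ i ∈ Finset.range (j + 1), b ^ i * a ^ (j - i) * (j.choose i) * altPow t i := by
  unfold altAff altPow
  simp_rw [add_pow, Finset.mul_sum]
  rw [Finset.sum_comm]
  refine Finset.sum_congr rfl fun i _ => Finset.sum_congr rfl fun l _ => ?_
  rw [mul_pow]; ring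

theorem altAff_eq_zero (a b : ℝ) (t j : ℕ) (h : j < t) : altAff a b t j = 0 := by
  rw [altAff_eq]
  refine Finset.sum_eq_zero fun i hi => ?_
  have := Finset.mem_range.1 hi
  rw [altPow_eq_zero i t (by omega), mul_zero]

theorem altPow_nonneg_even {t : ℕ} (ht : Even t) (i : ℕ) : 0 ≤ altPow t i := by
  have := altPow_nonneg i t
  rwa [ht.neg_one_pow, one_mul] at this

theorem altAff_nonneg {a b : ℝ} (ha : 0 < a) (hb : 0 < b) {t : ℕ} (ht : Even t) (j : ℕ) :
    0 ≤ altAff a b t j := by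
  rw [altAff_eq]
  refine Finset.sum_nonneg fun i hi => ?_
  have := altPow_nonneg_even ht i
  positivity

theorem altAff_pos {a b : ℝ} (ha : 0 < a) (hb : 0 < b) {t : ℕ} (ht : Even t) (j : ℕ)
    (h : t ≤ j) : 0 < altAff a b t j := by
  rw [altAff_eq]
  refine Finset.sum_pos' (fun i hi => ?_) ⟨t, Finset.mem_range.2 (by omega), ?_⟩
  · have := altPow_nonneg_even ht i
    positivity
  · have h1 := altPow_pos t
    rw [ht.neg_one_pow, one_mul] at h1
    have h2 : 0 < (j.choose t : ℝ) := by exact_mod_cast Nat.choose_pos h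
    positivity

theorem sum_split (f : ℕ → ℝ) (m : ℕ) : ∑ i ∈ Finset.range (2 * m + 1), f i
    = ∑ j ∈ Finset.range (m + 1), f (2 * j) + ∑ j ∈ Finset.range m, f (2 * j + 1) := by
  induction m with
  | zero => simp
  | succ m ih =>
    rw [show 2 * (m + 1) + 1 = 2 * m + 1 + 1 + 1 by ring, Finset.sum_range_succ,
      Finset.sum_range_succ, ih, Finset.sum_range_succ _ (m + 1), Finset.sum_range_succ (fun j => f (2 * j + 1)) m,
      show 2 * (m + 1) = 2 * m + 1 + 1 by ring]
    ring

/-- Coefficients of the even part. -/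
noncomputable def evCoef (s : ℝ) (m j : ℕ) : ℝ :=
  2 * s ^ (2 * m - 2 * j) * ((2 * m).choose (2 * j)) / 2 ^ (2 * m)

theorem even_part (s d : ℝ) (m : ℕ) : ((s + d) / 2) ^ (2 * m) + ((s - d) / 2) ^ (2 * m)
    = ∑ j ∈ Finset.range (m + 1), evCoef s m j * (d ^ 2) ^ j := by
  rw [div_pow, div_pow, ← add_div, sub_eq_add_neg, add_comm s d, add_comm s (-d), add_pow, add_pow,
    ← Finset.sum_add_distrib, sum_split, Finset.sum_eq_zero (s := Finset.range m), add_zero,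
    Finset.sum_div]
  · refine Finset.sum_congr rfl fun j _ => ?_
    rw [pow_mul (-d), neg_sq, ← pow_mul, evCoef]
    ring
  · intro j _
    rw [Odd.neg_pow ⟨j, rfl⟩]
    ring

theorem main_eq (m t : ℕ) (ht : 2 ≤ t) :
    (∑ l ∈ Finset.range (t + 1), (-1 : ℝ) ^ l * (t.choose l) *
        (((l : ℝ) - 1)
          + Real.sqrt ((((t : ℝ) ^ 2 + 1) +
              Real.sqrt (((t : ℝ) ^ 2 - 1) ^ 2 + 4 * l * t)) / 2) ^ (4 * m)
          + Real.sqrt ((((t : ℝ) ^ 2 + 1) -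
              Real.sqrt (((t : ℝ) ^ 2 - 1) ^ 2 + 4 * l * t)) / 2) ^ (4 * m)))
    = ∑ j ∈ Finset.range (m + 1), evCoef ((t : ℝ) ^ 2 + 1) m j *
        altAff (((t : ℝ) ^ 2 - 1) ^ 2) (4 * t) t j := by
  have hz : altPow t 1 - altPow t 0 = 0 := by
    rw [altPow_eq_zero 1 t (by omega), altPow_eq_zero 0 t (by omega), sub_zero]
  rw [← zero_add (∑ j ∈ Finset.range (m + 1), _), ← hz]
  unfold altAff altPow
  simp_rw [Finset.mul_sum]
  rw [Finset.sum_comm, ← Finset.sum_sub_distrib, ← Finset.sum_add_distrib]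
  refine Finset.sum_congr rfl fun l hl => ?_
  have hl' : (l : ℝ) ≤ t := by
    have := Finset.mem_range.1 hl
    exact_mod_cast (by omega : l ≤ t)
  have hD : 0 ≤ ((t : ℝ) ^ 2 - 1) ^ 2 + 4 * l * t := by positivity
  have hs : Real.sqrt (((t : ℝ) ^ 2 - 1) ^ 2 + 4 * l * t) ≤ (t : ℝ) ^ 2 + 1 := by
    apply Real.sqrt_le_iff.2
    refine ⟨by positivity, ?_⟩
    have : (l : ℝ) * t ≤ t * t := by gcongr
    nlinarith
  have hd0 := Real.sqrt_nonneg (((t : ℝ) ^ 2 - 1) ^ 2 + 4 * l * t)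
  have hd2 := Real.sq_sqrt hD
  set d := Real.sqrt (((t : ℝ) ^ 2 - 1) ^ 2 + 4 * l * t) with hd
  have e := even_part ((t : ℝ) ^ 2 + 1) d m
  rw [show 4 * m = 2 * (2 * m) by ring, pow_mul (Real.sqrt _), pow_mul (Real.sqrt _),
    Real.sq_sqrt (by positivity), Real.sq_sqrt (by linarith), add_assoc, e, hd2, mul_add,
    Finset.mul_sum]
  congr 1
  · ring
  · refine Finset.sum_congr rfl fun j _ => ?_
    rw [show ((t : ℝ) ^ 2 - 1) ^ 2 + 4 * l * t = 4 * t * l + ((t : ℝ) ^ 2 - 1) ^ 2 by ring]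
    ring

/-- For `p` a positive multiple of `4` and even `t ≥ 2`, with
`r₁(l) = √(((t²+1) + √((t²−1)²+4lt))/2)` and `r₂(l) = √(((t²+1) − √((t²−1)²+4lt))/2)`,
the alternating sum `∑_{l=0}^t (−1)^l·C(t,l)·((l−1) + r₁(l)^p + r₂(l)^p)` is nonzero
if and only if `t ≤ p/4`. -/
theorem gap_condition_iff (p t : ℕ) (hp : 0 < p) (hp4 : 4 ∣ p)
    (ht : 2 ≤ t) (hteven : Even t) :
    (∑ l ∈ Finset.range (t + 1), (-1 : ℝ) ^ l * (t.choose l) *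
        (((l : ℝ) - 1)
          + Real.sqrt ((((t : ℝ) ^ 2 + 1) +
              Real.sqrt (((t : ℝ) ^ 2 - 1) ^ 2 + 4 * l * t)) / 2) ^ p
          + Real.sqrt ((((t : ℝ) ^ 2 + 1) -
              Real.sqrt (((t : ℝ) ^ 2 - 1) ^ 2 + 4 * l * t)) / 2) ^ p)) ≠ 0 ↔
      4 * t ≤ p := by
  obtain ⟨m, rfl⟩ := hp4
  rw [main_eq m t ht]
  have ht' : (2 : ℝ) ≤ t := by exact_mod_cast ht
  have ha : 0 < ((t : ℝ) ^ 2 - 1) ^ 2 := by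
    have : 0 < (t : ℝ) ^ 2 - 1 := by nlinarith
    positivity
  have hb : 0 < 4 * (t : ℝ) := by positivity
  constructor
  · intro h
    by_contra hlt
    refine h (Finset.sum_eq_zero fun j hj => ?_)
    have := Finset.mem_range.1 hj
    rw [altAff_eq_zero _ _ t j (by omega), mul_zero]
  · intro h
    refine ne_of_gt (Finset.sum_pos' (fun j hj => ?_) ⟨m, Finset.mem_range.2 (by omega), ?_⟩)
    · have := altAff_nonneg ha hb hteven j
      unfold evCoef
      positivity
    · have := altAff_pos ha hb hteven m (by omega)
      unfold evCoef
      rw [Nat.choose_self]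
      positivity
end
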